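/- For every real number q with 0 < q < 1, one has S_odd(q,2) = Π_{i≥1} (1 + q^{2i})²·(1 + q^{i})/(1 − q^{i}), the infinite product converging absolutely. -/

import Mathlib

/-!
The weight `q^{A'} t^{B'}` is a product of weights of single sites. Summing over the positive values
at a site `i` leaves a hard-core model in which, at `t = 2`, an empty site has weight
`(q^{-i} - 1) / 4` relative to an occupied one, whatever the parity of `i`. With `p = 1 / q`, the
partition functions `F_N` of the sites `1, …, N` thus satisfy
`F_N = F_{N-1} + (p^N - 1) / 4 * F_{N-2}`. After rescaling by `2^{N+1}` this is the Goldman–Rota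
recurrence `G_{n+1} = 2 G_n + (p^n - 1) G_{n-1}` of the Galois numbers
`G_n = ∑_k [n choose k]_p` (`galois_rec`), whence `F_N = G_{N+1} / 2^{N+1}` (`hasSum_words`).

Rewriting the Gaussian binomials in base `q`, the configurations which agree with the ground state
at all sites `i > 2m` contribute
`(q; q)_{2m}⁻¹ ∑_{0 ≤ s ≤ m} q^{s(s+1)} [2m+1 choose m+1+s]_q` (`hasSum_truncated`).
By dominated convergence (`tendsto_thetaPart`) this tends to
`(q; q)_∞⁻² ∑_{s ≥ 0} q^{s(s+1)}`. The same limit in base `q²`, applied to a finite form of the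
Jacobi triple product (`thetaPart_sq`), gives `∑_{s ≥ 0} q^{s(s+1)} = ∏ (1 - q^{2i}) (1 + q^{2i})²`,
and `1 - q^{2i} = (1 - q^i) (1 + q^i)` yields the stated product.
-/

open scoped BigOperators

/-- `He` is the set of sequences `(ω_{-i})_{i ≥ 1}` of non-negative integers (indexed here by
`n : ℕ` with `i = n + 1`) with no two consecutive vanishing entries, agreeing for large `i`
with the sequence which is `1` at even `i` and `0` at odd `i`. -/
def He : Set (ℕ → ℕ) :=
  {ω | (∀ n : ℕ, ¬(ω n = 0 ∧ ω (n + 1) = 0)) ∧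
       (∃ N : ℕ, ∀ n ≥ N, ω n = if (n + 1) % 2 = 0 then 1 else 0)}

/-- `Ho` is as `He`, but agreeing for large `i` with the sequence which is `1` at odd `i`
and `0` at even `i`. -/
def Ho : Set (ℕ → ℕ) :=
  {ω | (∀ n : ℕ, ¬(ω n = 0 ∧ ω (n + 1) = 0)) ∧
       (∃ N : ℕ, ∀ n ≥ N, ω n = if (n + 1) % 2 = 1 then 1 else 0)}

/-- `A(ω) = Σ_{i odd} i·ω_{-i} + Σ_{i even} i·(ω_{-i} − 1)`. -/
noncomputable def Afun (ω : ℕ → ℕ) : ℤ :=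
  ∑ᶠ n : ℕ, (if (n + 1) % 2 = 1 then ((n : ℤ) + 1) * (ω n : ℤ)
             else ((n : ℤ) + 1) * ((ω n : ℤ) - 1))

/-- `B(ω) = 2·(Σ_{i odd} 1{ω_{-i} ≥ 1} − Σ_{i even} 1{ω_{-i} = 0})`. -/
noncomputable def Bfun (ω : ℕ → ℕ) : ℤ :=
  2 * ((∑ᶠ n : ℕ, if (n + 1) % 2 = 1 ∧ 1 ≤ ω n then (1 : ℤ) else 0)
     - (∑ᶠ n : ℕ, if (n + 1) % 2 = 0 ∧ ω n = 0 then (1 : ℤ) else 0))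

/-- `A'(ω) = Σ_{i even} i·ω_{-i} + Σ_{i odd} i·(ω_{-i} − 1)`. -/
noncomputable def A'fun (ω : ℕ → ℕ) : ℤ :=
  ∑ᶠ n : ℕ, (if (n + 1) % 2 = 0 then ((n : ℤ) + 1) * (ω n : ℤ)
             else ((n : ℤ) + 1) * ((ω n : ℤ) - 1))

/-- `B'(ω) = 2·(Σ_{i even} 1{ω_{-i} ≥ 1} − Σ_{i odd} 1{ω_{-i} = 0})`. -/
noncomputable def B'fun (ω : ℕ → ℕ) : ℤ :=
  2 * ((∑ᶠ n : ℕ, if (n + 1) % 2 = 0 ∧ 1 ≤ ω n then (1 : ℤ) else 0)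
     - (∑ᶠ n : ℕ, if (n + 1) % 2 = 1 ∧ ω n = 0 then (1 : ℤ) else 0))

/-- `S_even(q̃, t) = Σ_{ω ∈ H_e} q̃^{A(ω)} t^{B(ω)}`. -/
noncomputable def Seven (q t : ℝ) : ℝ := ∑' ω : He, q ^ Afun ω.1 * t ^ Bfun ω.1

/-- `S_odd(q̃, t) = Σ_{ω ∈ H_o} q̃^{A'(ω)} t^{B'(ω)}`. -/
noncomputable def Sodd (q t : ℝ) : ℝ := ∑' ω : Ho, q ^ A'fun ω.1 * t ^ B'fun ω.1

/-! ### Gaussian binomials and Galois numbers -/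

/-- The Gaussian binomial coefficient `[n choose k]_r`, defined by the `q`-Pascal rule. -/
noncomputable def gaussBin (r : ℝ) : ℕ → ℕ → ℝ
  | _, 0 => 1
  | 0, _ + 1 => 0
  | n + 1, k + 1 => gaussBin r n k + r ^ (k + 1) * gaussBin r n (k + 1)

/-- The finite `q`-Pochhammer symbol `(r; r)_n = ∏_{i=1}^n (1 - r^i)`. -/
noncomputable def poch (r : ℝ) (n : ℕ) : ℝ := ∏ i ∈ Finset.range n, (1 - r ^ (i + 1))

lemma gaussBin_zero_right (r : ℝ) (n : ℕ) : gaussBin r n 0 = 1 := by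
  cases n <;> simp [gaussBin]

lemma gaussBin_succ (r : ℝ) (n k : ℕ) :
    gaussBin r (n + 1) (k + 1) = gaussBin r n k + r ^ (k + 1) * gaussBin r n (k + 1) := by
  rw [gaussBin]

lemma gaussBin_eq_zero (r : ℝ) (n k : ℕ) (h : n < k) : gaussBin r n k = 0 := by
  induction n generalizing k with
  | zero => obtain ⟨k, rfl⟩ : ∃ j, k = j + 1 := ⟨k - 1, by omega⟩; simp [gaussBin]
  | succ n ih =>
    obtain ⟨k, rfl⟩ : ∃ j, k = j + 1 := ⟨k - 1, by omega⟩
    rw [gaussBin_succ, ih k (by omega), ih (k + 1) (by omega)]; simp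

lemma gaussBin_self (r : ℝ) (n : ℕ) : gaussBin r n n = 1 := by
  induction n with
  | zero => simp [gaussBin]
  | succ n ih => rw [gaussBin_succ, ih, gaussBin_eq_zero r n (n + 1) (by omega)]; simp

lemma gaussBin_absorb (r : ℝ) (n k : ℕ) :
    (r ^ (k + 1) - 1) * gaussBin r (n + 1) (k + 1) = (r ^ (n + 1) - 1) * gaussBin r n k := by
  induction n generalizing k with
  | zero =>
    cases k with
    | zero => simp [gaussBin]
    | succ k => simp [gaussBin]
  | succ n ih =>
    rw [gaussBin_succ r (n + 1) k]
    have h1 := ih k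
    cases k with
    | zero =>
      simp only [gaussBin_zero_right] at h1 ⊢
      linear_combination r * h1
    | succ k =>
      have h2 := ih k
      have h3 := gaussBin_succ r n k
      rw [h3] at h2 ⊢
      linear_combination r ^ (k + 2) * h1 + r * h2

lemma poch_succ (r : ℝ) (n : ℕ) : poch r (n + 1) = poch r n * (1 - r ^ (n + 1)) := by
  simp [poch, Finset.prod_range_succ]

lemma poch_zero (r : ℝ) : poch r 0 = 1 := by simp [poch]

lemma gaussBin_mul_poch (r : ℝ) (i j : ℕ) :
    gaussBin r (i + j) j * (poch r i * poch r j) = poch r (i + j) := by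
  induction i generalizing j with
  | zero => simp [gaussBin_self, poch_zero]
  | succ i ihi =>
    induction j with
    | zero => simp [gaussBin_zero_right, poch_zero]
    | succ j ihj =>
      have h1 := ihi (j + 1)
      rw [show i + 1 + (j + 1) = i + 1 + j + 1 by ring, gaussBin_succ, poch_succ r (i + 1 + j)]
      rw [show i + (j + 1) = i + 1 + j by ring] at h1
      rw [poch_succ r i] at ihj ⊢
      rw [poch_succ r j] at h1 ⊢
      linear_combination (1 - r ^ (j + 1)) * ihj + r ^ (j + 1) * (1 - r ^ (i + 1)) * h1

/-- The product formula for `[i + j choose j]` in base `1 / q`, written in terms of base `q`. -/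
lemma gaussBin_inv_mul_poch (q : ℝ) (hq : q ≠ 0) (i j : ℕ) :
    gaussBin q⁻¹ (i + j) j * q ^ (i * j) * (poch q i * poch q j) = poch q (i + j) := by
  induction i generalizing j with
  | zero => simp [gaussBin_self, poch_zero]
  | succ i ihi =>
    induction j with
    | zero => simp [gaussBin_zero_right, poch_zero]
    | succ j ihj =>
      have h1 := ihi (j + 1)
      rw [show i + 1 + (j + 1) = i + 1 + j + 1 by ring, gaussBin_succ, poch_succ q (i + 1 + j)]
      rw [show i + (j + 1) = i + 1 + j by ring] at h1
      rw [poch_succ q i] at ihj ⊢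
      rw [poch_succ q j] at h1 ⊢
      have e : q⁻¹ ^ (j + 1) * q ^ ((i + 1) * (j + 1)) = q ^ (i * (j + 1)) := by
        rw [inv_pow, show (i + 1) * (j + 1) = i * (j + 1) + (j + 1) by ring, pow_add]
        field_simp
        ring
      linear_combination q ^ (i + 1) * (1 - q ^ (j + 1)) * ihj + (1 - q ^ (i + 1)) * h1 +
        gaussBin q⁻¹ (i + 1 + j) (j + 1) * (poch q i * (1 - q ^ (i + 1))) *
          (poch q j * (1 - q ^ (j + 1))) * e

/-- The Galois number `∑_k [n choose k]_r`. -/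
noncomputable def galois (r : ℝ) (n : ℕ) : ℝ := ∑ k ∈ Finset.range (n + 1), gaussBin r n k

/-- The Goldman–Rota recurrence for Galois numbers. -/
lemma galois_rec (r : ℝ) (n : ℕ) :
    galois r (n + 2) = 2 * galois r (n + 1) + (r ^ (n + 1) - 1) * galois r n := by
  have h1 : ∀ k, gaussBin r (n + 2) (k + 1) =
      gaussBin r (n + 1) k + gaussBin r (n + 1) (k + 1) + (r ^ (n + 1) - 1) * gaussBin r n k := by
    intro k
    rw [gaussBin_succ r (n + 1) k]
    linear_combination gaussBin_absorb r n k
  have h2 : ∑ k ∈ Finset.range (n + 2), gaussBin r (n + 1) (k + 1) + 1 = galois r (n + 1) := by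
    have h := Finset.sum_range_succ' (gaussBin r (n + 1)) (n + 2)
    rw [Finset.sum_range_succ, gaussBin_eq_zero r (n + 1) (n + 2) (by omega),
      gaussBin_zero_right] at h
    rw [galois, ← h, add_zero]
  have h3 : ∑ k ∈ Finset.range (n + 2), gaussBin r n k = galois r n := by
    rw [Finset.sum_range_succ, gaussBin_eq_zero r n (n + 1) (by omega), add_zero, galois]
  rw [galois, Finset.sum_range_succ', gaussBin_zero_right]
  simp_rw [h1]
  rw [Finset.sum_add_distrib, Finset.sum_add_distrib, ← Finset.mul_sum, h3]
  rw [show ∑ k ∈ Finset.range (n + 2), gaussBin r (n + 1) k = galois r (n + 1) from rfl]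
  linear_combination h2

/-- The `q`-binomial theorem in base `q²`. -/
lemma qbinomial (q z : ℝ) (n : ℕ) :
    ∑ k ∈ Finset.range (n + 1), q ^ (k * (k - 1)) * gaussBin (q ^ 2) n k * z ^ k =
      ∏ i ∈ Finset.range n, (1 + z * q ^ (2 * i)) := by
  induction n generalizing z with
  | zero => simp [gaussBin]
  | succ n ih =>
    rw [Finset.prod_range_succ']
    have h1 : ∏ i ∈ Finset.range n, (1 + z * q ^ (2 * (i + 1))) =
        ∏ i ∈ Finset.range n, (1 + (z * q ^ 2) * q ^ (2 * i)) :=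
      Finset.prod_congr rfl fun i _ => by ring
    rw [h1, ← ih]
    set g := fun k => q ^ (k * (k - 1)) * gaussBin (q ^ 2) n k * (z * q ^ 2) ^ k with hg
    have h2 : ∀ k, q ^ ((k + 1) * (k + 1 - 1)) * gaussBin (q ^ 2) (n + 1) (k + 1) * z ^ (k + 1) =
        z * g k + g (k + 1) := by
      intro k
      simp only [hg, gaussBin_succ]
      have e : q ^ ((k + 1) * (k + 1 - 1)) = q ^ (k * (k - 1)) * q ^ (2 * k) := by
        rw [← pow_add]; congr 1
        cases k with
        | zero => rfl
        | succ k => simp only [Nat.add_sub_cancel]; ring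
      rw [e]; ring
    rw [Finset.sum_range_succ']
    simp_rw [h2]
    rw [Finset.sum_add_distrib, ← Finset.mul_sum]
    have h3 : ∑ k ∈ Finset.range (n + 1), g (k + 1) + g 0 = ∑ k ∈ Finset.range (n + 1), g k := by
      rw [← Finset.sum_range_succ' g (n + 1), Finset.sum_range_succ]
      simp [hg, gaussBin_eq_zero]
    have h4 : g 0 = 1 := by simp [hg, gaussBin_zero_right]
    rw [h4] at h3
    simp only [gaussBin_zero_right]
    simp
    linear_combination h3

lemma sum_halves (m : ℕ) (f : ℕ → ℝ) (h : ∀ s ≤ m, f (m - s) = f (m + 1 + s)) :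
    ∑ k ∈ Finset.range (2 * m + 2), f k = 2 * ∑ s ∈ Finset.range (m + 1), f (m + 1 + s) := by
  rw [show 2 * m + 2 = (m + 1) + (m + 1) by ring, Finset.sum_range_add,
    ← Finset.sum_range_reflect f (m + 1), two_mul]
  congr 1
  refine Finset.sum_congr rfl fun s hs => ?_
  rw [← h s (by simp at hs; omega)]
  congr 1

/-- The right half `s ≥ 0` of the symmetric sum `∑_s q^{s(s+1)} [2m+1 choose m+1+s]_r`, in
product form. -/
noncomputable def thetaPart (q r : ℝ) (m : ℕ) : ℝ :=
  ∑ s ∈ Finset.range (m + 1),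
    q ^ (s * (s + 1)) * (poch r (2 * m + 1) * (poch r (m - s))⁻¹ * (poch r (m + 1 + s))⁻¹)

lemma poch_pos (r : ℝ) (h0 : 0 < r) (h1 : r < 1) (n : ℕ) : 0 < poch r n :=
  Finset.prod_pos fun i _ => by
    have := pow_lt_one₀ h0.le h1 (Nat.succ_ne_zero i)
    simp only [Nat.succ_eq_add_one] at this
    linarith

/-- Since `[n choose k]` in base `1 / q` is `q^{-k(n-k)}` times the one in base `q`, the Galois
number in base `1 / q` becomes a theta-like sum. -/
lemma galois_eq_thetaPart (q : ℝ) (h0 : 0 < q) (h1 : q < 1) (m : ℕ) :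
    q ^ (m * (m + 1)) * galois q⁻¹ (2 * m + 1) = 2 * thetaPart q q m := by
  have key : ∀ s ≤ m, ∀ i j, i + j = 2 * m + 1 → i * j = (m - s) * (m + 1 + s) →
      q ^ (m * (m + 1)) * gaussBin q⁻¹ (2 * m + 1) j =
        q ^ (s * (s + 1)) * (poch q (2 * m + 1) * (poch q i)⁻¹ * (poch q j)⁻¹) := by
    intro s hs i j hij hp
    have h := gaussBin_inv_mul_poch q h0.ne' i j
    rw [hij] at h
    have pi := (poch_pos q h0 h1 i).ne'
    have pj := (poch_pos q h0 h1 j).ne'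
    have e : m * (m + 1) = s * (s + 1) + i * j := by
      rw [hp]; obtain ⟨a, rfl⟩ := Nat.exists_eq_add_of_le hs
      rw [Nat.add_sub_cancel_left]; ring
    rw [e, pow_add, ← h]
    field_simp
  rw [galois, Finset.mul_sum, sum_halves, thetaPart]
  · congr 1
    refine Finset.sum_congr rfl fun s hs => ?_
    simp at hs
    exact key s (by omega) _ _ (by omega) rfl
  · intro s hs
    rw [key s hs (m + 1 + s) (m - s) (by omega) (mul_comm _ _),
      key s hs (m - s) (m + 1 + s) (by omega) rfl]
    ring

/-- A finite form of the Jacobi triple product specialised to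
`∑_{s ≥ 0} q^{s(s+1)} = ∏ (1 - q^{2i}) (1 + q^{2i})²`: it is the `q`-binomial theorem in base `q²`
for `n = 2m + 1` and `z = q^{-2m}`, folded along the symmetry `k ↔ 2m + 1 - k`. -/
lemma thetaPart_sq (q : ℝ) (h0 : 0 < q) (h1 : q < 1) (m : ℕ) :
    thetaPart q (q ^ 2) m = ∏ i ∈ Finset.range m, (1 + q ^ (2 * (i + 1))) ^ 2 := by
  have hr0 : 0 < q ^ 2 := by positivity
  have hr1 : q ^ 2 < 1 := pow_lt_one₀ h0.le h1 (by norm_num)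
  have hb := qbinomial q (q⁻¹ ^ (2 * m)) (2 * m + 1)
  have hR : q ^ (m * (m + 1)) * ∏ i ∈ Finset.range (2 * m + 1), (1 + q⁻¹ ^ (2 * m) * q ^ (2 * i)) =
      2 * ∏ i ∈ Finset.range m, (1 + q ^ (2 * (i + 1))) ^ 2 := by
    rw [show 2 * m + 1 = m + (m + 1) by ring, Finset.prod_range_add, Finset.prod_range_succ',
      ← Finset.prod_range_reflect]
    have e1 : ∏ j ∈ Finset.range m, (1 + q⁻¹ ^ (2 * m) * q ^ (2 * (m - 1 - j))) =
        ∏ j ∈ Finset.range m, ((q ^ (2 * (j + 1)))⁻¹ * (1 + q ^ (2 * (j + 1)))) := by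
      refine Finset.prod_congr rfl fun j hj => ?_
      simp at hj
      obtain ⟨a, rfl⟩ := Nat.exists_eq_add_of_lt hj
      rw [show j + a + 1 - 1 - j = a by omega, inv_pow,
        show 2 * (j + a + 1) = 2 * (j + 1) + 2 * a by ring, pow_add]
      field_simp
      ring
    have e2 : ∏ j ∈ Finset.range m, (1 + q⁻¹ ^ (2 * m) * q ^ (2 * (m + (j + 1)))) =
        ∏ j ∈ Finset.range m, (1 + q ^ (2 * (j + 1))) := by
      refine Finset.prod_congr rfl fun j hj => ?_
      rw [inv_pow, show 2 * (m + (j + 1)) = 2 * m + 2 * (j + 1) by ring, pow_add]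
      field_simp
    have e3 : ∀ m : ℕ, ∏ j ∈ Finset.range m, (q ^ (2 * (j + 1)))⁻¹ = (q ^ (m * (m + 1)))⁻¹ := by
      intro m
      induction m with
      | zero => simp
      | succ m ih =>
        rw [Finset.prod_range_succ, ih, ← mul_inv, ← pow_add]; congr 2; ring
    rw [e1, e2, Finset.prod_mul_distrib, e3, Finset.prod_pow, add_zero, inv_pow]
    have : q ^ (m * (m + 1)) ≠ 0 := by positivity
    field_simp
    norm_num
  rw [← hb, Finset.mul_sum, sum_halves] at hR
  · have : (2 : ℝ) ≠ 0 := two_ne_zero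
    rw [← mul_left_cancel₀ this hR, thetaPart]
    refine Finset.sum_congr rfl fun s hs => ?_
    simp at hs
    have h := gaussBin_mul_poch (q ^ 2) (m - s) (m + 1 + s)
    rw [show m - s + (m + 1 + s) = 2 * m + 1 by omega] at h
    rw [← h]
    have pi := (poch_pos _ hr0 hr1 (m - s)).ne'
    have pj := (poch_pos _ hr0 hr1 (m + 1 + s)).ne'
    have e : q ^ (m * (m + 1)) * (q ^ ((m + 1 + s) * (m + 1 + s - 1)) *
        (q⁻¹ ^ (2 * m)) ^ (m + 1 + s)) = q ^ (s * (s + 1)) := by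
      rw [← pow_mul, inv_pow, ← mul_assoc, ← pow_add, ← div_eq_mul_inv,
        div_eq_iff (by positivity), ← pow_add, show m + 1 + s - 1 = m + s by omega]
      congr 1; ring
    rw [← e]
    field_simp
  · intro s hs
    obtain ⟨a, rfl⟩ := Nat.exists_eq_add_of_le hs
    have hg : gaussBin (q ^ 2) (2 * (s + a) + 1) a =
        gaussBin (q ^ 2) (2 * (s + a) + 1) (s + a + 1 + s) := by
      have h := gaussBin_mul_poch (q ^ 2) a (s + a + 1 + s)
      have h' := gaussBin_mul_poch (q ^ 2) (s + a + 1 + s) a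
      rw [show a + (s + a + 1 + s) = 2 * (s + a) + 1 by ring] at h
      rw [show (s + a + 1 + s) + a = 2 * (s + a) + 1 by ring] at h'
      have pi := (poch_pos _ hr0 hr1 a).ne'
      have pj := (poch_pos _ hr0 hr1 (s + a + 1 + s)).ne'
      refine mul_right_cancel₀ (mul_ne_zero pj pi) ?_
      rw [h', ← h]; ring
    rw [Nat.add_sub_cancel_left, hg]
    have e : q ^ (a * (a - 1)) * (q⁻¹ ^ (2 * (s + a))) ^ a =
        q ^ ((s + a + 1 + s) * (s + a + 1 + s - 1)) *
          (q⁻¹ ^ (2 * (s + a))) ^ (s + a + 1 + s) := by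
      rw [← pow_mul, ← pow_mul, inv_pow, inv_pow, ← div_eq_mul_inv, ← div_eq_mul_inv,
        div_eq_div_iff (by positivity) (by positivity), ← pow_add, ← pow_add,
        show s + a + 1 + s - 1 = s + a + s by omega]
      congr 1
      cases a with
      | zero => ring
      | succ a => rw [Nat.add_sub_cancel]; ring
    linear_combination q ^ ((s + a) * (s + a + 1)) *
      gaussBin (q ^ 2) (2 * (s + a) + 1) (s + a + 1 + s) * e

/-! ### Limits of the finite sums and products -/

open Filter Topology

lemma multipliable_inv_one_sub (r : ℝ) (h0 : 0 < r) (h1 : r < 1) :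
    Multipliable fun i : ℕ => (1 - r ^ (i + 1))⁻¹ := by
  have hlt : ∀ i : ℕ, r ^ (i + 1) ≤ r := fun i => by
    simpa using pow_le_pow_of_le_one h0.le h1.le (show 1 ≤ i + 1 by omega)
  have hs : Summable fun i : ℕ => ‖r ^ (i + 1) / (1 - r ^ (i + 1))‖ := by
    refine Summable.of_nonneg_of_le (fun i => norm_nonneg _) (fun i => ?_)
      (((summable_geometric_of_lt_one h0.le h1)).mul_right (1 - r)⁻¹)
    have := hlt i
    rw [Real.norm_of_nonneg (div_nonneg (by positivity) (by linarith)), div_eq_mul_inv]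
    have h2 : r ^ (i + 1) ≤ r ^ i := pow_le_pow_of_le_one h0.le h1.le (by omega)
    have h3 : 0 < 1 - r := by linarith
    have h4 : 0 < 1 - r ^ (i + 1) := by linarith
    gcongr
  refine (multipliable_one_add_of_summable hs).congr fun i => ?_
  have := hlt i
  have h4 : 1 - r ^ (i + 1) ≠ 0 := by linarith
  field_simp
  ring

/-- The increasing sequence `1 / (r; r)_n` converges to a positive limit, which bounds it. -/
lemma exists_lim_poch_inv (r : ℝ) (h0 : 0 < r) (h1 : r < 1) :
    ∃ M : ℝ, 0 < M ∧ Tendsto (fun n => (poch r n)⁻¹) atTop (𝓝 M) ∧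
      ∀ n, (poch r n)⁻¹ ≤ M := by
  have ht := (multipliable_inv_one_sub r h0 h1).hasProd.tendsto_prod_nat
  have e : (fun n => ∏ i ∈ Finset.range n, (1 - r ^ (i + 1))⁻¹) = fun n => (poch r n)⁻¹ := by
    funext n; rw [poch, Finset.prod_inv_distrib]
  rw [e] at ht
  have hm : Monotone fun n => (poch r n)⁻¹ := by
    refine monotone_nat_of_le_succ fun n => ?_
    have hp := poch_pos r h0 h1 n
    refine inv_anti₀ (poch_pos r h0 h1 (n + 1)) ?_
    rw [poch_succ]
    have : 0 < r ^ (n + 1) := by positivity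
    nlinarith
  have hle := fun n => hm.ge_of_tendsto ht n
  refine ⟨_, ?_, ht, hle⟩
  have := hle 0
  simp [poch_zero] at this
  linarith

lemma poch_le_one (r : ℝ) (h0 : 0 < r) (h1 : r < 1) (n : ℕ) : poch r n ≤ 1 := by
  refine Finset.prod_le_one (fun i _ => ?_) fun i _ => ?_
  · have := pow_le_one₀ h0.le h1.le (n := i + 1); linarith
  · have : 0 < r ^ (i + 1) := by positivity
    linarith

/-- The limit of `thetaPart` by dominated convergence: each summand tends to
`q^{s(s+1)} / (r; r)_∞`. -/
lemma tendsto_thetaPart (q r M : ℝ) (hq0 : 0 < q) (hq1 : q < 1) (h0 : 0 < r) (h1 : r < 1)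
    (hM : 0 < M) (ht : Tendsto (fun n => (poch r n)⁻¹) atTop (𝓝 M))
    (hle : ∀ n, (poch r n)⁻¹ ≤ M) :
    Tendsto (thetaPart q r) atTop (𝓝 ((∑' s : ℕ, q ^ (s * (s + 1))) * M)) := by
  set f : ℕ → ℕ → ℝ := fun m s => if s < m + 1 then q ^ (s * (s + 1)) *
    (poch r (2 * m + 1) * (poch r (m - s))⁻¹ * (poch r (m + 1 + s))⁻¹) else 0 with hf
  have e : thetaPart q r = fun m => ∑' s, f m s := by
    funext m
    rw [tsum_eq_sum (s := Finset.range (m + 1)), thetaPart]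
    · refine Finset.sum_congr rfl fun s hs => ?_
      simp only [hf]; rw [if_pos (by simpa using hs)]
    · intro s hs
      simp only [hf]; rw [if_neg (by simpa using hs)]
  have hP : Tendsto (poch r) atTop (𝓝 M⁻¹) := by
    simpa using ht.inv₀ hM.ne'
  have hsum : Summable fun s : ℕ => q ^ (s * (s + 1)) := by
    refine Summable.of_nonneg_of_le (fun s => by positivity) (fun s => ?_)
      (summable_geometric_of_lt_one hq0.le hq1)
    exact pow_le_pow_of_le_one hq0.le hq1.le (by nlinarith)
  rw [e, ← tsum_mul_right]
  refine tendsto_tsum_of_dominated_convergence (hsum.mul_right (M * M)) ?_ ?_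
  · intro s
    have t1 : Tendsto (fun m => poch r (2 * m + 1)) atTop (𝓝 M⁻¹) :=
      hP.comp (tendsto_atTop_mono (fun m => show m ≤ 2 * m + 1 by omega) tendsto_id)
    have t2 : Tendsto (fun m => (poch r (m - s))⁻¹) atTop (𝓝 M) :=
      ht.comp (tendsto_sub_atTop_nat s)
    have t3 : Tendsto (fun m => (poch r (m + 1 + s))⁻¹) atTop (𝓝 M) :=
      ht.comp (tendsto_atTop_mono (fun m => show m ≤ m + 1 + s by omega) tendsto_id)
    have t := ((t1.mul t2).mul t3).const_mul (q ^ (s * (s + 1)))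
    rw [inv_mul_cancel₀ hM.ne', one_mul] at t
    refine t.congr' ?_
    filter_upwards [eventually_ge_atTop s] with m hm
    simp only [hf]; rw [if_pos (by omega)]
  · refine Eventually.of_forall fun m s => ?_
    simp only [hf]
    split_ifs
    · have p1 := poch_pos r h0 h1 (2 * m + 1)
      have p2 := inv_pos.2 (poch_pos r h0 h1 (m - s))
      have p3 := inv_pos.2 (poch_pos r h0 h1 (m + 1 + s))
      rw [Real.norm_of_nonneg (by positivity)]
      have l1 := poch_le_one r h0 h1 (2 * m + 1)
      have l2 := hle (m - s)
      have l3 := hle (m + 1 + s)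
      gcongr
      calc poch r (2 * m + 1) * (poch r (m - s))⁻¹ ≤ 1 * M := by gcongr
        _ = M := one_mul M
    · simp only [norm_zero]; positivity

lemma multipliable_one_add_pow (r : ℝ) (h0 : 0 < r) (h1 : r < 1) :
    Multipliable fun i : ℕ => 1 + r ^ (i + 1) := by
  refine multipliable_one_add_of_summable ?_
  have := (summable_nat_add_iff 1).2 (summable_geometric_of_lt_one h0.le h1)
  exact this.norm

lemma multipliable_target (q : ℝ) (hq0 : 0 < q) (hq1 : q < 1) :
    Multipliable (fun i : ℕ =>
      (1 + q ^ (2 * (i + 1))) ^ 2 * (1 + q ^ (i + 1)) / (1 - q ^ (i + 1))) := by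
  have hr1 : q ^ 2 < 1 := pow_lt_one₀ hq0.le hq1 (by norm_num)
  have a := multipliable_one_add_pow (q ^ 2) (by positivity) hr1
  have b := multipliable_one_add_pow q hq0 hq1
  have c := multipliable_inv_one_sub q hq0 hq1
  refine (((a.mul a).mul b).mul c).congr fun i => ?_
  rw [← pow_mul, div_eq_mul_inv]; ring

/-- The infinite product is the limit of `thetaPart q q m / (q; q)_{2m}`, that is
`(∑_{s ≥ 0} q^{s(s+1)}) / (q; q)_∞²`. -/
lemma tendsto_target (q : ℝ) (hq0 : 0 < q) (hq1 : q < 1) :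
    Tendsto (fun m => thetaPart q q m * (poch q (2 * m))⁻¹) atTop (𝓝 (∏' i : ℕ,
      (1 + q ^ (2 * (i + 1))) ^ 2 * (1 + q ^ (i + 1)) / (1 - q ^ (i + 1)))) := by
  have hr1 : q ^ 2 < 1 := pow_lt_one₀ hq0.le hq1 (by norm_num)
  have hr0 : 0 < q ^ 2 := by positivity
  obtain ⟨M, hM, ht, hle⟩ := exists_lim_poch_inv q hq0 hq1
  obtain ⟨N, hN, hu, hue⟩ := exists_lim_poch_inv (q ^ 2) hr0 hr1
  have t1 := tendsto_thetaPart q q M hq0 hq1 hq0 hq1 hM ht hle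
  have t2 := tendsto_thetaPart q (q ^ 2) N hq0 hq1 hr0 hr1 hN hu hue
  have t3 : Tendsto (fun m => (poch q (2 * m))⁻¹) atTop (𝓝 M) :=
    ht.comp (tendsto_atTop_mono (fun m => show m ≤ 2 * m by omega) tendsto_id)
  have t4 := (multipliable_target q hq0 hq1).hasProd.tendsto_prod_nat
  have t5 := ((t2.mul (hu.inv₀ hN.ne')).mul ht).mul ht
  have e : ∀ m, ∏ i ∈ Finset.range m,
      (1 + q ^ (2 * (i + 1))) ^ 2 * (1 + q ^ (i + 1)) / (1 - q ^ (i + 1)) =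
      thetaPart q (q ^ 2) m * ((poch (q ^ 2) m)⁻¹)⁻¹ * (poch q m)⁻¹ * (poch q m)⁻¹ := by
    intro m
    rw [thetaPart_sq q hq0 hq1, inv_inv, poch, poch, ← Finset.prod_inv_distrib,
      ← Finset.prod_mul_distrib, ← Finset.prod_mul_distrib, ← Finset.prod_mul_distrib]
    refine Finset.prod_congr rfl fun i _ => ?_
    have := pow_lt_one₀ hq0.le hq1 (Nat.succ_ne_zero i)
    simp only [Nat.succ_eq_add_one] at this
    have h4 : 1 - q ^ (i + 1) ≠ 0 := by linarith
    rw [← pow_mul, show q ^ (2 * (i + 1)) = (q ^ (i + 1)) ^ 2 by ring]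
    field_simp
    ring
  have heq := tendsto_nhds_unique (t4.congr e) t5
  rw [heq, show ((∑' s : ℕ, q ^ (s * (s + 1))) * N) * N⁻¹ * M * M =
    ((∑' s : ℕ, q ^ (s * (s + 1))) * M) * M by field_simp]
  exact t1.mul t3

/-! ### Transfer matrix for words without consecutive zeros -/

/-- The weight of the value `k` at the site `i = n + 1`, at `t = 2`: the factor it contributes to
`q^{A'} 2^{B'}`. -/
noncomputable def siteW (q : ℝ) (n k : ℕ) : ℝ :=
  if (n + 1) % 2 = 0 then (if k = 0 then 1 else 4 * q ^ ((n + 1) * k))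
  else (if k = 0 then (q ^ (n + 1))⁻¹ / 4 else q ^ ((n + 1) * (k - 1)))

/-- The total weight of the positive values at the site `i = n + 1`. -/
noncomputable def siteC (q : ℝ) (n : ℕ) : ℝ :=
  if (n + 1) % 2 = 0 then 4 * q ^ (n + 1) / (1 - q ^ (n + 1)) else (1 - q ^ (n + 1))⁻¹

lemma siteW_nonneg (q : ℝ) (h0 : 0 < q) (n k : ℕ) : 0 ≤ siteW q n k := by
  unfold siteW; split_ifs <;> positivity

lemma one_sub_pow_pos (q : ℝ) (h0 : 0 < q) (h1 : q < 1) (n : ℕ) : 0 < 1 - q ^ (n + 1) := by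
  have := pow_lt_one₀ h0.le h1 (Nat.succ_ne_zero n)
  simp only [Nat.succ_eq_add_one] at this
  linarith

lemma hasSum_siteC (q : ℝ) (h0 : 0 < q) (h1 : q < 1) (n : ℕ) :
    HasSum (fun k => if k = 0 then 0 else siteW q n k) (siteC q n) := by
  have hp := one_sub_pow_pos q h0 h1 n
  rw [← hasSum_nat_add_iff' 1]
  have hg := hasSum_geometric_of_lt_one (r := q ^ (n + 1)) (by positivity) (by linarith)
  by_cases hn : (n + 1) % 2 = 0
  · simp only [siteW, siteC, hn, Finset.range_one, Finset.sum_singleton, if_true, sub_zero,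
      Nat.add_eq_zero_iff, one_ne_zero, and_false, if_false]
    rw [div_eq_mul_inv]
    refine (hg.mul_left (4 * q ^ (n + 1))).congr_fun ?_
    intro k; ring
  · simp only [siteW, siteC, hn, Finset.range_one, Finset.sum_singleton, if_true, sub_zero,
      Nat.add_eq_zero_iff, one_ne_zero, and_false, if_false, Nat.add_sub_cancel]
    refine hg.congr_fun ?_
    intro k; rw [pow_mul]

/-- At `t = 2`, the weight of an empty site relative to an occupied one is `(q^{-i} - 1) / 4` for
both parities of `i`. -/
lemma siteW_zero (q : ℝ) (h0 : 0 < q) (h1 : q < 1) (n : ℕ) :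
    siteW q n 0 = siteC q n * ((q⁻¹ ^ (n + 1) - 1) / 4) := by
  have hp := (one_sub_pow_pos q h0 h1 n).ne'
  have : q ^ (n + 1) ≠ 0 := by positivity
  rw [inv_pow]
  by_cases hn : (n + 1) % 2 = 0
  · simp only [siteW, siteC, hn, if_true]
    field_simp
  · simp only [siteW, siteC, hn, if_true, if_false]
    field_simp

/-- A word with no two consecutive vanishing letters. -/
def Good {N : ℕ} (u : Fin N → ℕ) : Prop :=
  ∀ (n : ℕ) (h : n + 1 < N), ¬(u ⟨n, by omega⟩ = 0 ∧ u ⟨n + 1, h⟩ = 0)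

/-- A word that is empty or whose last letter does not vanish. -/
def LastOk {N : ℕ} (u : Fin N → ℕ) : Prop :=
  ∀ i : Fin N, i.1 + 1 = N → u i ≠ 0

lemma lastOk_snoc {N : ℕ} (u : Fin N → ℕ) (k : ℕ) :
    LastOk (Fin.snoc u k : Fin (N + 1) → ℕ) ↔ k ≠ 0 := by
  constructor
  · intro h
    have := h (Fin.last N) (by simp)
    simpa using this
  · intro hk i hi
    have : i = Fin.last N := Fin.ext (by simpa using hi)
    subst this; simpa using hk

lemma snoc_mk_lt {N : ℕ} (u : Fin N → ℕ) (k n : ℕ) (h : n < N) (h' : n < N + 1) :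
    (Fin.snoc u k : Fin (N + 1) → ℕ) ⟨n, h'⟩ = u ⟨n, h⟩ :=
  Fin.snoc_castSucc (α := fun _ => ℕ) k u ⟨n, h⟩

lemma good_snoc {N : ℕ} (u : Fin N → ℕ) (k : ℕ) :
    Good (Fin.snoc u k : Fin (N + 1) → ℕ) ↔ Good u ∧ (k ≠ 0 ∨ LastOk u) := by
  have hlast : ∀ h, (Fin.snoc u k : Fin (N + 1) → ℕ) ⟨N, h⟩ = k := fun h =>
    Fin.snoc_last (α := fun _ => ℕ) k u
  constructor
  · intro h
    refine ⟨fun n hn => ?_, ?_⟩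
    · have := h n (by omega)
      rwa [snoc_mk_lt u k n (by omega), snoc_mk_lt u k (n + 1) hn] at this
    · by_contra! hc
      obtain ⟨hk, hl⟩ := hc
      unfold LastOk at hl
      push Not at hl
      obtain ⟨i, hi, hui⟩ := hl
      refine h i.1 (by omega) ⟨?_, ?_⟩
      · rw [snoc_mk_lt u k i.1 i.2]; exact hui
      · simp only [hi]; rw [hlast]; exact hk
  · rintro ⟨hg, hk⟩ n hn ⟨h1, h2⟩
    rcases Nat.lt_or_ge (n + 1) N with h | h
    · rw [snoc_mk_lt u k n (by omega)] at h1
      rw [snoc_mk_lt u k (n + 1) h] at h2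
      exact hg n h ⟨h1, h2⟩
    · have e : n + 1 = N := by omega
      simp only [e] at h2
      rw [hlast] at h2
      rw [snoc_mk_lt u k n (by omega)] at h1
      rcases hk with hk | hk
      · exact hk h2
      · exact hk ⟨n, by omega⟩ e h1

open Classical in
/-- The transfer-matrix computation: the weighted sums over words of length `N` without two
consecutive zeros, and over those which in addition do not end in a zero. -/
lemma hasSum_words (q : ℝ) (h0 : 0 < q) (h1 : q < 1) (N : ℕ) :
    HasSum (fun u : Fin N → ℕ => if Good u then ∏ i : Fin N, siteW q i (u i) else 0)
      ((∏ n ∈ Finset.range N, siteC q n) * galois q⁻¹ (N + 1) / 2 ^ (N + 1)) ∧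
    HasSum (fun u : Fin N → ℕ => if Good u ∧ LastOk u then ∏ i : Fin N, siteW q i (u i) else 0)
      ((∏ n ∈ Finset.range N, siteC q n) * galois q⁻¹ N / 2 ^ N) := by
  induction N with
  | zero =>
    have g0 : galois q⁻¹ 0 = 1 := by simp [galois, gaussBin]
    have g1 : galois q⁻¹ 1 = 2 := by
      simp [galois, Finset.sum_range_succ, gaussBin]; norm_num
    have hg : ∀ u : Fin 0 → ℕ, Good u := fun u n h => by omega
    have hl : ∀ u : Fin 0 → ℕ, LastOk u := fun u i => i.elim0
    rw [g0, g1]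
    simp only [hg, hl, and_self, if_true]
    constructor
    · simp
    · simp
  | succ N ih =>
    obtain ⟨ha, hb⟩ := ih
    set a : (Fin N → ℕ) → ℝ := fun u => if Good u then ∏ i : Fin N, siteW q i (u i) else 0 with hadef
    set b : (Fin N → ℕ) → ℝ :=
      fun u => if Good u ∧ LastOk u then ∏ i : Fin N, siteW q i (u i) else 0 with hbdef
    have hpn : ∀ u : Fin N → ℕ, 0 ≤ ∏ i : Fin N, siteW q i (u i) := fun u =>
      Finset.prod_nonneg fun i _ => siteW_nonneg q h0 _ _
    have ha0 : 0 ≤ a := fun u => by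
      simp only [hadef, Pi.zero_apply]; split_ifs; exacts [hpn u, le_rfl]
    have hb0 : 0 ≤ b := fun u => by
      simp only [hbdef, Pi.zero_apply]; split_ifs; exacts [hpn u, le_rfl]
    have hc := hasSum_siteC q h0 h1 N
    have hc0 : 0 ≤ fun k => if k = 0 then 0 else siteW q N k := fun k => by
      simp only [Pi.zero_apply]; split_ifs; exacts [le_rfl, siteW_nonneg q h0 _ _]
    have he : HasSum (fun k => if k = 0 then siteW q N 0 else 0) (siteW q N 0) :=
      hasSum_ite_eq 0 _
    have he0 : 0 ≤ fun k => if k = 0 then siteW q N 0 else 0 := fun k => by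
      simp only [Pi.zero_apply]; split_ifs; exacts [siteW_nonneg q h0 _ _, le_rfl]
    have hca := hc.mul ha (hc.summable.mul_of_nonneg ha.summable hc0 ha0)
    have heb := he.mul hb (he.summable.mul_of_nonneg hb.summable he0 hb0)
    have hrec := galois_rec q⁻¹ N
    have hz := siteW_zero q h0 h1 N
    have hG : ∀ (k : ℕ) (u : Fin N → ℕ), Good ((Fin.snocEquiv fun _ : Fin (N + 1) => ℕ) (k, u)) ↔
        Good u ∧ (k ≠ 0 ∨ LastOk u) := fun k u => good_snoc u k
    have hLO : ∀ (k : ℕ) (u : Fin N → ℕ),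
        LastOk ((Fin.snocEquiv fun _ : Fin (N + 1) => ℕ) (k, u)) ↔ k ≠ 0 :=
      fun k u => lastOk_snoc u k
    constructor
    · rw [← (Fin.snocEquiv fun _ : Fin (N + 1) => ℕ).hasSum_iff]
      convert! hca.add heb using 1
      · funext ⟨k, u⟩
        simp only [Function.comp, hG, Fin.snocEquiv_apply, Fin.prod_univ_castSucc,
          Fin.snoc_castSucc, Fin.snoc_last, hadef, hbdef, Fin.val_castSucc, Fin.val_last]
        by_cases hk : k = 0 <;> by_cases hgu : Good u <;> by_cases hlu : LastOk u <;>
          simp [hk, hgu, hlu, mul_comm]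
      · rw [Finset.prod_range_succ, hrec, hz]
        field_simp
        ring
    · rw [← (Fin.snocEquiv fun _ : Fin (N + 1) => ℕ).hasSum_iff]
      convert! hca using 1
      · funext ⟨k, u⟩
        simp only [Function.comp, hG, hLO, Fin.snocEquiv_apply,
          Fin.prod_univ_castSucc, Fin.snoc_castSucc, Fin.snoc_last, hadef, Fin.val_castSucc,
          Fin.val_last]
        by_cases hk : k = 0 <;> by_cases hgu : Good u <;>
          simp [hk, hgu, mul_comm]
      · rw [Finset.prod_range_succ]
        ring

lemma prod_siteC (q : ℝ) (m : ℕ) :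
    ∏ n ∈ Finset.range (2 * m), siteC q n = 4 ^ m * q ^ (m * (m + 1)) * (poch q (2 * m))⁻¹ := by
  induction m with
  | zero => simp [poch_zero]
  | succ m ih =>
    rw [show 2 * (m + 1) = 2 * m + 1 + 1 by ring, Finset.prod_range_succ, Finset.prod_range_succ,
      ih, poch_succ, poch_succ, siteC, siteC, if_neg (by omega), if_pos (by omega)]
    simp only [mul_inv, div_eq_mul_inv]
    ring

/-! ### Exhausting the configurations -/

/-- The values of the ground state of `Ho`. -/
def ground (n : ℕ) : ℕ := if (n + 1) % 2 = 1 then 1 else 0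

lemma zpow_sum_mul (q : ℝ) (hq : q ≠ 0) (a b c : ℕ → ℤ) (N : ℕ) :
    q ^ (∑ n ∈ Finset.range N, a n) *
      (2 : ℝ) ^ (2 * (∑ n ∈ Finset.range N, b n - ∑ n ∈ Finset.range N, c n)) =
    ∏ n ∈ Finset.range N, (q ^ a n * (2 : ℝ) ^ (2 * (b n - c n))) := by
  induction N with
  | zero => simp
  | succ N ih =>
    rw [Finset.prod_range_succ, ← ih, Finset.sum_range_succ, Finset.sum_range_succ,
      Finset.sum_range_succ, zpow_add₀ hq, mul_mul_mul_comm, ← zpow_add₀ (two_ne_zero' ℝ)]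
    congr 2
    ring

lemma term_eq_prod (q : ℝ) (h0 : 0 < q) (ω : ℕ → ℕ) (N : ℕ) (h : ∀ n ≥ N, ω n = ground n) :
    q ^ A'fun ω * (2 : ℝ) ^ B'fun ω = ∏ n ∈ Finset.range N, siteW q n (ω n) := by
  have hA : A'fun ω = ∑ n ∈ Finset.range N, (if (n + 1) % 2 = 0 then ((n : ℤ) + 1) * (ω n : ℤ)
             else ((n : ℤ) + 1) * ((ω n : ℤ) - 1)) := by
    refine finsum_eq_sum_of_support_subset _ fun n hn => ?_
    by_contra hc
    have hc : N ≤ n := by simpa using hc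
    apply hn
    simp only [h n hc, ground]
    rcases Nat.mod_two_eq_zero_or_one (n + 1) with e | e <;> simp [e]
  have hB1 : (∑ᶠ n : ℕ, if (n + 1) % 2 = 0 ∧ 1 ≤ ω n then (1 : ℤ) else 0) =
      ∑ n ∈ Finset.range N, if (n + 1) % 2 = 0 ∧ 1 ≤ ω n then (1 : ℤ) else 0 := by
    refine finsum_eq_sum_of_support_subset _ fun n hn => ?_
    by_contra hc
    have hc : N ≤ n := by simpa using hc
    apply hn
    simp only [h n hc, ground]
    rcases Nat.mod_two_eq_zero_or_one (n + 1) with e | e <;> simp [e]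
  have hB2 : (∑ᶠ n : ℕ, if (n + 1) % 2 = 1 ∧ ω n = 0 then (1 : ℤ) else 0) =
      ∑ n ∈ Finset.range N, if (n + 1) % 2 = 1 ∧ ω n = 0 then (1 : ℤ) else 0 := by
    refine finsum_eq_sum_of_support_subset _ fun n hn => ?_
    by_contra hc
    have hc : N ≤ n := by simpa using hc
    apply hn
    simp only [h n hc, ground]
    rcases Nat.mod_two_eq_zero_or_one (n + 1) with e | e <;> simp [e]
  rw [B'fun, hB1, hB2, hA, zpow_sum_mul q h0.ne']
  refine Finset.prod_congr rfl fun n _ => ?_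
  unfold siteW
  rcases Nat.mod_two_eq_zero_or_one (n + 1) with e | e
  · rcases Nat.eq_zero_or_pos (ω n) with hk | hk
    · simp [e, hk]
    · have : ((n : ℤ) + 1) * (ω n : ℤ) = (((n + 1) * ω n : ℕ) : ℤ) := by push_cast; ring
      simp only [e, if_true, this, zpow_natCast]
      simp [hk.ne', Nat.one_le_iff_ne_zero]
      rw [mul_comm]; norm_num
  · rcases Nat.eq_zero_or_pos (ω n) with hk | hk
    · simp only [e, hk]
      simp
      rw [show -1 + -(n : ℤ) = -((n + 1 : ℕ) : ℤ) by push_cast; ring, zpow_neg, zpow_natCast]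
      norm_num [div_eq_mul_inv]
    · obtain ⟨k, hk⟩ := Nat.exists_eq_add_of_lt hk
      rw [zero_add] at hk
      have : ((n : ℤ) + 1) * ((ω n : ℤ) - 1) = (((n + 1) * k : ℕ) : ℤ) := by
        rw [hk]; push_cast; ring
      rw [if_neg (by omega), if_neg (by omega), if_neg (by omega), if_neg (by omega),
        if_neg (by omega), this, zpow_natCast, hk]
      simp

/-- The extension of a word by the ground state. -/
def extend {N : ℕ} (u : Fin N → ℕ) (n : ℕ) : ℕ := if h : n < N then u ⟨n, h⟩ else ground n

/-- For even `N` a word followed by the ground state creates no new pair of consecutive zeros,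
since the first letter of the remaining ground state is `1`. -/
lemma extend_mem {m : ℕ} (u : Fin (2 * m) → ℕ) (hu : Good u) : extend u ∈ Ho := by
  refine ⟨fun n => ?_, 2 * m, fun n hn => ?_⟩
  · rintro ⟨ha, hb⟩
    unfold extend at ha hb
    split_ifs at ha hb with h1 h2
    · exact hu n h2 ⟨ha, hb⟩
    · unfold ground at hb
      split_ifs at hb
      omega
    · omega
    · unfold ground at ha hb
      split_ifs at ha hb
      omega
  · simp only [extend, ground]
    rw [dif_neg (by omega)]

open Classical in
/-- The partial sum of `Sodd q 2` over the configurations agreeing with the ground state at the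
sites `i > 2m`. -/
lemma hasSum_truncated (q : ℝ) (h0 : 0 < q) (h1 : q < 1) (m : ℕ) :
    HasSum (fun ω : Ho => if ∀ n ≥ 2 * m, ω.1 n = ground n then
        q ^ A'fun ω.1 * (2 : ℝ) ^ B'fun ω.1 else 0)
      (thetaPart q q m * (poch q (2 * m))⁻¹) := by
  have hw := (hasSum_words q h0 h1 (2 * m)).1
  have hval : (∏ n ∈ Finset.range (2 * m), siteC q n) * galois q⁻¹ (2 * m + 1) / 2 ^ (2 * m + 1) =
      thetaPart q q m * (poch q (2 * m))⁻¹ := by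
    have hg := galois_eq_thetaPart q h0 h1 m
    rw [prod_siteC, pow_succ, pow_mul (2 : ℝ), show (2 : ℝ) ^ 2 = 4 by norm_num,
      div_eq_iff (by positivity)]
    linear_combination 4 ^ m * (poch q (2 * m))⁻¹ * hg
  rw [hval] at hw
  have hinj : Function.Injective
      (fun u : {u : Fin (2 * m) → ℕ // Good u} => (⟨extend u.1, extend_mem u.1 u.2⟩ : Ho)) := by
    intro u v huv
    refine Subtype.ext (funext fun i => ?_)
    have := congrFun (congrArg Subtype.val huv) i.1
    simpa [extend, i.2] using this
  rw [← hinj.hasSum_iff]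
  · rw [← Subtype.val_injective.hasSum_iff (g := fun u : {u : Fin (2 * m) → ℕ // Good u} => u.1)]
      at hw
    · convert! hw using 1
      funext u
      have hg : ∀ n ≥ 2 * m, extend u.1 n = ground n := fun n hn => by
        rw [extend, dif_neg (by omega)]
      simp only [Function.comp]
      rw [if_pos hg, if_pos u.2, term_eq_prod q h0 _ (2 * m) hg, Finset.prod_range]
      refine Finset.prod_congr rfl fun i _ => ?_
      simp [extend]
    · intro u hu
      rw [if_neg]
      intro hc
      exact hu ⟨⟨u, hc⟩, rfl⟩
  · intro ω hω
    rw [if_neg]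
    intro hc
    refine hω ⟨⟨fun i => ω.1 i, fun n h => ω.2.1 n⟩, Subtype.ext (funext fun n => ?_)⟩
    simp only [extend]
    split_ifs with h
    · rfl
    · exact (hc n (by omega)).symm

open Classical in
/-- The truncated sums exhaust the positive series `Sodd q 2`, so their limit is its value. -/
lemma Sodd_eq_of_tendsto (q L : ℝ) (h0 : 0 < q) (h1 : q < 1)
    (hL : Tendsto (fun m => thetaPart q q m * (poch q (2 * m))⁻¹) atTop (𝓝 L)) :
    Sodd q 2 = L := by
  set f : Ho → ℝ := fun ω => q ^ A'fun ω.1 * (2 : ℝ) ^ B'fun ω.1 with hf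
  have hf0 : ∀ ω, 0 ≤ f ω := fun ω => by simp only [hf]; positivity
  have ht := hasSum_truncated q h0 h1
  have hfin : ∀ s : Finset Ho, ∑ ω ∈ s, f ω ≤ L := by
    intro s
    refine ge_of_tendsto hL ?_
    have hev : ∀ᶠ m in atTop, ∀ ω ∈ s, ∀ n ≥ 2 * m, ω.1 n = ground n := by
      rw [Filter.eventually_all_finset]
      intro ω _
      obtain ⟨N, hN⟩ := ω.2.2
      filter_upwards [eventually_ge_atTop N] with m hm n hn
      exact hN n (by omega)
    filter_upwards [hev] with m hm
    refine le_trans (le_of_eq ?_) (sum_le_hasSum s (fun ω _ => ?_) (ht m))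
    · refine Finset.sum_congr rfl fun ω hω => ?_
      rw [if_pos (hm ω hω)]
    · split_ifs; exacts [hf0 ω, le_rfl]
  have hsum : Summable f := summable_of_sum_le hf0 hfin
  refine le_antisymm (hsum.tsum_le_of_sum_le hfin) ?_
  refine le_of_tendsto' hL fun m => ?_
  refine hasSum_le (fun ω => ?_) (ht m) hsum.hasSum
  split_ifs
  exacts [le_rfl, hf0 ω]

theorem statement10 (q : ℝ) (hq0 : 0 < q) (hq1 : q < 1) :
    Multipliable (fun i : ℕ =>
      (1 + q ^ (2 * (i + 1))) ^ 2 * (1 + q ^ (i + 1)) / (1 - q ^ (i + 1))) ∧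
    Sodd q 2 = ∏' i : ℕ,
      (1 + q ^ (2 * (i + 1))) ^ 2 * (1 + q ^ (i + 1)) / (1 - q ^ (i + 1)) := by
  exact ⟨multipliable_target q hq0 hq1,
    Sodd_eq_of_tendsto q _ hq0 hq1 (tendsto_target q hq0 hq1)⟩
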